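/- arXiv:2601.21195 — 2 statements merged into one kernel-verified Lean document; each statement's English description precedes it below -/
import Mathlib

section
/- Let q be a prime power and x = (x_1,…,x_n) arbitrary weights. Identify each coset gB ∈ G/B with the complete flag F = (V_0 ⊆ V_1 ⊆ ⋯ ⊆ V_n) of 𝔽_q^n in which V_i is the span of the first i columns of the distinguished representative of gB. Then for every complete flag F, F · T_{G/B}(q,x) = ∑_{lines L ⊆ 𝔽_q^n} (x_{i(L)}/q^{n−i(L)}) · (V_0 ⊆ L ⊆ L+V_1 ⊆ ⋯ ⊆ L+V_{n−1} ⊆ V_n)^, where the sum is over all 1-dimensional subspaces L of 𝔽_q^n, i(L) is the unique index such that L = span(e_{i(L)} + ∑_{k>i(L)} c_k e_k) for some coefficients c_k ∈ 𝔽_q, and ^ denotes removal of the unique repeated subspace in the chain. Consequently, the transition matrix of T_{G/B}(q,x) acting on the right equals the transpose of the transition matrix of the left-multiplication operator by ∑_L (x_{i(L)}/q^{n−i(L)})·L in the q-free left regular band of partial flags. -/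
open scoped Classical
set_option linter.unusedSectionVars false
set_option synthInstance.maxHeartbeats 1000000
set_option maxHeartbeats 1000000

noncomputable section

namespace QTsetlin

/-- `M` is upper triangular. -/
def upperTri {F : Type} [Field F] {n : ℕ} (M : Matrix (Fin n) (Fin n) F) : Prop :=
  ∀ i j : Fin n, j < i → M i j = 0

/-- `M` is lower triangular. -/
def lowerTri {F : Type} [Field F] {n : ℕ} (M : Matrix (Fin n) (Fin n) F) : Prop :=
  ∀ i j : Fin n, i < j → M i j = 0

variable (F : Type) [Field F] [Fintype F] [DecidableEq F] (n : ℕ)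

/-- The general linear group `G = GL_n(F_q)`. -/
abbrev GLn := GL (Fin n) F

/-- The Borel subgroup `B` of invertible upper triangular matrices. -/
def Bsub : Subgroup (GLn F n) where
  carrier := {g | upperTri (g : Matrix (Fin n) (Fin n) F)}
  one_mem' := by
    intro i j hij
    simp [Matrix.one_apply, (Fin.ne_of_lt hij).symm]
  mul_mem' := by
    intro a b ha hb i j hij
    exact Matrix.BlockTriangular.mul ha hb hij
  inv_mem' := by
    intro a ha
    have hdet : IsUnit ((a : Matrix (Fin n) (Fin n) F).det) :=
      (Matrix.isUnit_iff_isUnit_det _).mp a.isUnit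
    have hinv : Invertible (a : Matrix (Fin n) (Fin n) F) :=
      Matrix.invertibleOfIsUnitDet _ hdet
    have h2 : ((a : Matrix (Fin n) (Fin n) F)⁻¹).BlockTriangular (id : Fin n → Fin n) :=
      Matrix.blockTriangular_inv_of_blockTriangular ha
    show upperTri ((a⁻¹ : GLn F n) : Matrix (Fin n) (Fin n) F)
    rw [show ((a⁻¹ : GLn F n) : Matrix (Fin n) (Fin n) F)
        = (a : Matrix (Fin n) (Fin n) F)⁻¹ from Matrix.coe_units_inv a]
    exact h2

/-- The set of cosets `G/B`. -/
abbrev Cosets := GLn F n ⧸ Bsub F n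

/-- permutation matrix of `π`: entry 1 in positions `(π j, j)`. -/
def permMat (π : Equiv.Perm (Fin n)) : Matrix (Fin n) (Fin n) F :=
  fun i j => if π j = i then 1 else 0

lemma permMat_mul (π σ : Equiv.Perm (Fin n)) :
    permMat F n π * permMat F n σ = permMat F n (π * σ) := by
  ext i j
  rw [Matrix.mul_apply]
  simp only [permMat, mul_ite, ite_mul, one_mul, mul_one, mul_zero, zero_mul]
  rw [Finset.sum_eq_single (σ j)]
  · by_cases h : π (σ j) = i <;> simp [Equiv.Perm.mul_apply, h]
  · intro k _ hk
    simp [hk.symm]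
  · simp

lemma permMat_one : permMat F n 1 = 1 := by
  ext i j
  simp [permMat, Matrix.one_apply, eq_comm]

/-- The permutation matrix of `π`, as an element of `GL_n(F)`. -/
def permGL (π : Equiv.Perm (Fin n)) : GLn F n :=
  ⟨permMat F n π, permMat F n π⁻¹,
    by rw [permMat_mul, mul_inv_cancel, permMat_one],
    by rw [permMat_mul, inv_mul_cancel, permMat_one]⟩

/-- `f_i(t)`: identity matrix with an extra entry `t` in position `(r, c)`, as an
element of `GL_n(F)`. -/
def transvGL (r c : Fin n) (h : r ≠ c) (t : F) : GLn F n :=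
  ⟨Matrix.transvection r c t, Matrix.transvection r c (-t),
    by rw [Matrix.transvection_mul_transvection_same _ _ h, add_neg_cancel,
      Matrix.transvection_zero],
    by rw [Matrix.transvection_mul_transvection_same _ _ h, neg_add_cancel,
      Matrix.transvection_zero]⟩

variable (K : Type) [Field K]

/-- Matrix (row convention: row `gB` is `(gB) · T_{k+1}`) of the Hecke generator `T_{k+1}`
(paper indexing) on `ℂ[G/B]`:
`(gB)·T_i = g s_i B + ∑_{t ≠ 0} g f_i(t) B`, where `s_i` swaps (0-based) positions `k, k+1`
and `f_i(t)` has an extra entry `t` in (0-based) position `(k+1, k)`. -/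
def genGB (k : ℕ) : Matrix (Cosets F n) (Cosets F n) K := fun C D =>
  if h : k + 1 < n then
    (if (QuotientGroup.mk (C.out * permGL F n
          (Equiv.swap ⟨k, Nat.lt_of_succ_lt h⟩ ⟨k + 1, h⟩)) : Cosets F n) = D then 1 else 0)
    + ((Finset.univ.filter fun t : F => t ≠ 0 ∧
        (QuotientGroup.mk (C.out * transvGL F n ⟨k + 1, h⟩ ⟨k, Nat.lt_of_succ_lt h⟩
          (fun hc => by simp [Fin.ext_iff] at hc) t) : Cosets F n) = D).card : K)
  else 0

/-- Matrix of the product `T_k T_{k-1} ⋯ T_1` (paper indexing) on `ℂ[G/B]`. -/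
def prodGenGB : ℕ → Matrix (Cosets F n) (Cosets F n) K
  | 0 => 1
  | k + 1 => genGB F n K k * prodGenGB k

/-- The (0-based) row index of the leading entry (the pivot `1` of the distinguished coset
representative) in the first column of a representative of the coset `C`. -/
def pivotRow (C : Cosets F n) : ℕ :=
  sInf {i : ℕ | ∃ h : i < n,
    ((C.out : GLn F n) : Matrix (Fin n) (Fin n) F) ⟨i, h⟩
      ⟨0, Nat.lt_of_le_of_lt (Nat.zero_le i) h⟩ ≠ 0}

/-- Matrix of the weighting operator `X_{G/B}(q,x)`, where `q` is the cardinality of the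
field: `gB ↦ (x_i / q^{n-i}) gB` with `i` the row index of the leading 1 in the first
column of the distinguished representative of `gB`. -/
def XGB (x : Fin n → K) : Matrix (Cosets F n) (Cosets F n) K := fun C D =>
  if D = C then
    (if h : pivotRow F n C < n then
      x ⟨pivotRow F n C, h⟩ / (Fintype.card F : K) ^ (n - 1 - pivotRow F n C)
    else 0)
  else 0

/-- Matrix of the q-Tsetlin library operator
`T_{G/B}(q,x) = (∑_{i=1}^n T_{i-1} ⋯ T_1) ∘ X_{G/B}(q,x)` on `ℂ[G/B]` (row convention). -/
def TGB (x : Fin n → K) : Matrix (Cosets F n) (Cosets F n) K :=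
  (∑ k ∈ Finset.range n, prodGenGB F n K k) * XGB F n K x

/-- The coset `gB` belongs to the double coset `[π] = B⁻ π B`. -/
def inDC (π : Equiv.Perm (Fin n)) (C : Cosets F n) : Prop :=
  ∃ l b : GLn F n, lowerTri (l : Matrix (Fin n) (Fin n) F) ∧
    upperTri (b : Matrix (Fin n) (Fin n) F) ∧
    C = QuotientGroup.mk (l * permGL F n π * b)

instance (F : Type) [Field F] [Fintype F] [DecidableEq F] (n : ℕ) :
    Finite (Projectivization F (Fin n → F)) :=
  Quotient.finite _

noncomputable instance (F : Type) [Field F] [Fintype F] [DecidableEq F] (n : ℕ) :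
    Fintype (Projectivization F (Fin n → F)) := Fintype.ofFinite _

/-- `V_d`: the span of the first `d` columns of (a representative of) the coset `C`;
since right multiplication by an upper triangular matrix preserves the partial column
spans, this is the span of the first `d` columns of the distinguished representative. -/
def colSpan (C : Cosets F n) (d : ℕ) : Submodule F (Fin n → F) :=
  Submodule.span F
    ((fun j : Fin n => fun r : Fin n => ((C.out : GLn F n) : Matrix (Fin n) (Fin n) F) r j)
      '' {j : Fin n | (j : ℕ) < d})

/-- `i(L)` (0-based): for a line `L = span(e_i + ∑_{k>i} c_k e_k)`, the index `i`, i.e. the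
least index at which a (hence any) nonzero vector of `L` has a nonzero coordinate. -/
def iOfLine (p : Projectivization F (Fin n → F)) : ℕ :=
  sInf {i : ℕ | ∃ h : i < n, p.rep ⟨i, h⟩ ≠ 0}

/-- The weight `x_{i(L)} / q^{n - i(L)}` of the line `L` (with 1-based `i(L)`). -/
def lineWeight (x : Fin n → K) (p : Projectivization F (Fin n → F)) : K :=
  if h : iOfLine F n p < n then
    x ⟨iOfLine F n p, h⟩ / (Fintype.card F : K) ^ (n - 1 - iOfLine F n p)
  else 0

/-- The flag `(V_0 ⊆ L ⊆ L + V_1 ⊆ ⋯ ⊆ L + V_{n-1} ⊆ V_n)ˆ` obtained from the flag `V` by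
adding the line `L` at the front and removing the unique repeated subspace: its `d`-th
member is `L ⊔ V_{d-1}` until `L` is absorbed, and `V_d` afterwards. -/
def addLine (L : Submodule F (Fin n → F)) (V : ℕ → Submodule F (Fin n → F)) (d : ℕ) :
    Submodule F (Fin n → F) :=
  if d = 0 then ⊥ else if L ≤ V (d - 1) then V d else L ⊔ V (d - 1)

/-- The matrix (column convention) of the left-multiplication operator by the element
`∑_L (x_{i(L)}/q^{n-i(L)}) · L` of the q-free left regular band of partial flags, acting on
complete flags: the `(G, F)` entry is the coefficient of the flag `G` in the result of
multiplying the flag `F` on the left. -/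
def leftLRBMat (x : Fin n → K) : Matrix (Cosets F n) (Cosets F n) K := fun D C =>
  ∑ p : Projectivization F (Fin n → F),
    lineWeight F n K x p *
      (if ∀ d : ℕ, d ≤ n →
          colSpan F n D d = addLine F n (Projectivization.submodule p) (colSpan F n C) d
       then 1 else 0)

lemma mem_spanCols (g : GLn F n) (d : ℕ) (w : Fin n → F) :
    w ∈ Submodule.span F
      ((fun j : Fin n => fun r : Fin n => (g : Matrix (Fin n) (Fin n) F) r j)
        '' {j : Fin n | (j : ℕ) < d}) ↔
      ∀ i : Fin n, d ≤ (i : ℕ) →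
        (((g⁻¹ : GLn F n) : Matrix (Fin n) (Fin n) F).mulVec w) i = 0 := by
  have h1 : ((g⁻¹ : GLn F n) : Matrix (Fin n) (Fin n) F) * (g : Matrix (Fin n) (Fin n) F) = 1 := by
    rw [← Units.val_mul, inv_mul_cancel, Units.val_one]
  have h2 : (g : Matrix (Fin n) (Fin n) F) * ((g⁻¹ : GLn F n) : Matrix (Fin n) (Fin n) F) = 1 := by
    rw [← Units.val_mul, mul_inv_cancel, Units.val_one]
  constructor
  · intro hw
    induction hw using Submodule.span_induction with
    | mem x hx =>
      obtain ⟨j, hj, rfl⟩ := hx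
      intro i hi
      have := congrFun (congrFun h1 i) j
      rw [Matrix.mul_apply] at this
      simp only [Matrix.mulVec, dotProduct]
      rw [this, Matrix.one_apply_ne]
      rintro rfl
      simp only [Set.mem_setOf_eq] at hj
      omega
    | zero => intro i _; simp
    | add x y _ _ hx hy =>
      intro i hi
      rw [Matrix.mulVec_add, Pi.add_apply, hx i hi, hy i hi, add_zero]
    | smul a x _ hx =>
      intro i hi
      rw [Matrix.mulVec_smul, Pi.smul_apply, hx i hi, smul_zero]
  · intro h
    have : w = (g : Matrix (Fin n) (Fin n) F).mulVec
        (((g⁻¹ : GLn F n) : Matrix (Fin n) (Fin n) F).mulVec w) := by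
      rw [Matrix.mulVec_mulVec, h2, Matrix.one_mulVec]
    rw [this, Matrix.mulVec_eq_sum]
    refine Submodule.sum_mem _ fun j _ => ?_
    by_cases hj : (j : ℕ) < d
    · have hs : (fun r : Fin n => (g : Matrix (Fin n) (Fin n) F) r j) ∈ Submodule.span F
          ((fun j : Fin n => fun r : Fin n => (g : Matrix (Fin n) (Fin n) F) r j)
            '' {j : Fin n | (j : ℕ) < d}) := Submodule.subset_span ⟨j, hj, rfl⟩
      have := Submodule.smul_mem _
        ((((g⁻¹ : GLn F n) : Matrix (Fin n) (Fin n) F).mulVec w) j) hs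
      convert this using 1
      ext r
      simp [Matrix.transpose_apply, mul_comm]
    · rw [h j (by omega)]
      simp

/-- coordinates of `w` in the basis given by the columns of the chosen representative -/
def co (C : Cosets F n) (w : Fin n → F) : Fin n → F :=
  (((C.out)⁻¹ : GLn F n) : Matrix (Fin n) (Fin n) F).mulVec w

lemma mem_colSpan (C : Cosets F n) (d : ℕ) (w : Fin n → F) :
    w ∈ colSpan F n C d ↔ ∀ i : Fin n, d ≤ (i : ℕ) → co F n C w i = 0 :=
  mem_spanCols F n C.out d w

lemma co_add (C : Cosets F n) (v w : Fin n → F) :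
    co F n C (v + w) = co F n C v + co F n C w := Matrix.mulVec_add _ _ _

lemma co_sub (C : Cosets F n) (v w : Fin n → F) :
    co F n C (v - w) = co F n C v - co F n C w := Matrix.mulVec_sub _ _ _

lemma co_smul (C : Cosets F n) (a : F) (w : Fin n → F) :
    co F n C (a • w) = a • co F n C w := Matrix.mulVec_smul _ _ _

lemma co_surj (C : Cosets F n) (a : Fin n → F) : ∃ w, co F n C w = a := by
  refine ⟨((C.out : GLn F n) : Matrix (Fin n) (Fin n) F).mulVec a, ?_⟩
  rw [co, Matrix.mulVec_mulVec, ← Units.val_mul, inv_mul_cancel, Units.val_one, Matrix.one_mulVec]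

lemma upperTri_mulVec (b : Matrix (Fin n) (Fin n) F) (hb : upperTri b) (d : ℕ) (a : Fin n → F)
    (ha : ∀ i : Fin n, d ≤ (i : ℕ) → a i = 0) :
    ∀ i : Fin n, d ≤ (i : ℕ) → b.mulVec a i = 0 := by
  intro i hi
  simp only [Matrix.mulVec, dotProduct]
  refine Finset.sum_eq_zero fun j _ => ?_
  by_cases hj : j < i
  · rw [hb i j hj, zero_mul]
  · rw [ha j (by have : i ≤ j := not_lt.mp hj
                 have : (i : ℕ) ≤ j := this
                 omega), mul_zero]

lemma mem_colSpan_mk (g : GLn F n) (d : ℕ) (w : Fin n → F) :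
    w ∈ colSpan F n (QuotientGroup.mk g) d ↔
      ∀ i : Fin n, d ≤ (i : ℕ) →
        (((g⁻¹ : GLn F n) : Matrix (Fin n) (Fin n) F).mulVec w) i = 0 := by
  rw [mem_colSpan]
  obtain ⟨b, hb⟩ := QuotientGroup.mk_out_eq_mul (Bsub F n) g
  have hb1 : upperTri ((b : GLn F n) : Matrix (Fin n) (Fin n) F) := b.2
  have hb2 : upperTri (((b : GLn F n)⁻¹ : GLn F n) : Matrix (Fin n) (Fin n) F) :=
    (Bsub F n).inv_mem b.2
  unfold co
  rw [hb, mul_inv_rev, Units.val_mul, ← Matrix.mulVec_mulVec]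
  constructor
  · intro h
    have := upperTri_mulVec F n _ hb1 d _ h
    rwa [Matrix.mulVec_mulVec, ← Units.val_mul, mul_inv_cancel, Units.val_one,
      Matrix.one_mulVec] at this
  · exact upperTri_mulVec F n _ hb2 d _

lemma mem_colSpan_mk_mul (C : Cosets F n) (h : GLn F n) (d : ℕ) (w : Fin n → F) :
    w ∈ colSpan F n (QuotientGroup.mk (C.out * h)) d ↔
      ∀ i : Fin n, d ≤ (i : ℕ) →
        (((h⁻¹ : GLn F n) : Matrix (Fin n) (Fin n) F).mulVec (co F n C w)) i = 0 := by
  rw [mem_colSpan_mk, mul_inv_rev, Units.val_mul, ← Matrix.mulVec_mulVec]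
  rfl

lemma colSpan_mono (C : Cosets F n) {d e : ℕ} (h : d ≤ e) : colSpan F n C d ≤ colSpan F n C e := by
  intro w hw
  rw [mem_colSpan] at hw ⊢
  intro i hi
  exact hw i (h.trans hi)

lemma colSpan_zero (C : Cosets F n) : colSpan F n C 0 = ⊥ := by
  simp [colSpan]

lemma colSpan_top (C : Cosets F n) {d : ℕ} (h : n ≤ d) : colSpan F n C d = ⊤ := by
  rw [eq_top_iff]
  intro w _
  rw [mem_colSpan]
  intro i hi
  have := i.2
  omega

lemma colSpan_inj (C D : Cosets F n) (h : ∀ d, d ≤ n → colSpan F n C d = colSpan F n D d) :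
    C = D := by
  rw [← QuotientGroup.out_eq' C, ← QuotientGroup.out_eq' D]
  rw [QuotientGroup.eq]
  intro i j hij
  have hm : (fun r : Fin n => ((D.out : GLn F n) : Matrix (Fin n) (Fin n) F) r j)
      ∈ colSpan F n C (j + 1) := by
    rw [h _ (by have := j.2; omega)]
    exact Submodule.subset_span ⟨j, by simp, rfl⟩
  rw [mem_colSpan] at hm
  have := hm i hij
  rw [Units.val_mul, Matrix.mul_apply]
  exact this

lemma colSpan_succ (C : Cosets F n) (d : ℕ) (w : Fin n → F)
    (h1 : w ∈ colSpan F n C (d + 1)) (h2 : w ∉ colSpan F n C d) :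
    colSpan F n C (d + 1) = colSpan F n C d ⊔ Submodule.span F {w} := by
  apply le_antisymm
  · intro u hu
    rw [mem_colSpan] at h1 h2 hu
    push Not at h2
    obtain ⟨i, hi, hne⟩ := h2
    have hid : (i : ℕ) = d := by
      by_contra hc
      exact hne (h1 i (by omega))
    have : u = (u - (co F n C u i / co F n C w i) • w) + (co F n C u i / co F n C w i) • w := by
      simp
    rw [this]
    refine Submodule.add_mem_sup ?_ (Submodule.smul_mem _ _ (Submodule.mem_span_singleton_self w))
    rw [mem_colSpan]
    intro j hj
    rw [co_sub, co_smul, Pi.sub_apply, Pi.smul_apply, smul_eq_mul]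
    by_cases hji : j = i
    · subst hji
      field_simp
      simp
    · have : d + 1 ≤ (j : ℕ) := by
        have : (j : ℕ) ≠ i := fun hc => hji (Fin.ext hc)
        omega
      rw [hu j this, h1 j this]
      simp
  · refine sup_le (colSpan_mono F n C (by omega)) ?_
    rw [Submodule.span_singleton_le_iff_mem]
    exact h1

/-- The `k`-th generator changes exactly the member of dimension `k+1`. -/
def Arel (k : ℕ) (C E : Cosets F n) : Prop :=
  (∀ i, i ≠ k + 1 → colSpan F n E i = colSpan F n C i) ∧
    colSpan F n E (k + 1) ≠ colSpan F n C (k + 1)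

lemma transv_inv_mulVec (r c : Fin n) (h : r ≠ c) (t : F) (a : Fin n → F) (j : Fin n) :
    (((transvGL F n r c h t)⁻¹ : GLn F n) : Matrix (Fin n) (Fin n) F).mulVec a j
      = a j - (if j = r then t * a c else 0) := by
  show (Matrix.transvection r c (-t)).mulVec a j = _
  rw [Matrix.transvection, Matrix.add_mulVec, Matrix.one_mulVec, Pi.add_apply]
  by_cases hj : j = r
  · subst hj
    simp [Matrix.mulVec, dotProduct, Matrix.single_apply, sub_eq_add_neg]
  · simp [Matrix.mulVec, dotProduct, Matrix.single_apply, hj, Ne.symm hj]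

lemma perm_inv_mulVec (π : Equiv.Perm (Fin n)) (a : Fin n → F) (j : Fin n) :
    (((permGL F n π)⁻¹ : GLn F n) : Matrix (Fin n) (Fin n) F).mulVec a j = a (π j) := by
  show (permMat F n π⁻¹).mulVec a j = _
  simp only [Matrix.mulVec, dotProduct, permMat, ite_mul, one_mul, zero_mul]
  rw [Finset.sum_eq_single (π j)]
  · simp
  · intro b _ hb
    rw [if_neg]
    rintro rfl
    simp at hb
  · simp

lemma Arel_transv (k : ℕ) (h : k + 1 < n) (hne) (C : Cosets F n) (t : F) (ht : t ≠ 0) :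
    Arel F n k C (QuotientGroup.mk (C.out * transvGL F n ⟨k + 1, h⟩ ⟨k, Nat.lt_of_succ_lt h⟩ hne t)) := by
  constructor
  · intro i hi
    ext w
    rw [mem_colSpan_mk_mul, mem_colSpan]
    simp only [transv_inv_mulVec]
    constructor
    · intro H j hj
      have h1 := H j hj
      split_ifs at h1 with hj1
      · subst hj1
        have h2 := H ⟨k, Nat.lt_of_succ_lt h⟩ (by simp at hj ⊢; omega)
        rw [if_neg (by simp), sub_zero] at h2
        rwa [h2, mul_zero, sub_zero] at h1
      · simpa using h1
    · intro H j hj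
      rw [H j hj]
      split_ifs with hj1
      · subst hj1
        rw [H ⟨k, Nat.lt_of_succ_lt h⟩ (by simp at hj ⊢; omega)]
        simp
      · simp
  · intro hc
    obtain ⟨w, hw⟩ := co_surj F n C (Pi.single ⟨k, Nat.lt_of_succ_lt h⟩ 1)
    have : w ∈ colSpan F n C (k + 1) := by
      rw [mem_colSpan, hw]
      intro i hi
      rw [Pi.single_apply, if_neg]
      rintro rfl
      simp at hi
    rw [← hc, mem_colSpan_mk_mul, hw] at this
    have := this ⟨k + 1, h⟩ (by simp)
    rw [transv_inv_mulVec] at this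
    simp [Pi.single_apply, ht] at this

lemma Arel_perm (k : ℕ) (h : k + 1 < n) (C : Cosets F n) :
    Arel F n k C (QuotientGroup.mk (C.out * permGL F n
          (Equiv.swap ⟨k, Nat.lt_of_succ_lt h⟩ ⟨k + 1, h⟩))) := by
  constructor
  · intro i hi
    ext w
    rw [mem_colSpan_mk_mul, mem_colSpan]
    simp only [perm_inv_mulVec]
    have key : ∀ j : Fin n, i ≤ (j : ℕ) →
        i ≤ ((Equiv.swap (⟨k, Nat.lt_of_succ_lt h⟩ : Fin n) ⟨k + 1, h⟩ j : Fin n) : ℕ) := by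
      intro j hj
      rw [Equiv.swap_apply_def]
      split_ifs with h1 h2
      · subst h1
        simp at hj ⊢; omega
      · subst h2
        simp at hj ⊢; omega
      · exact hj
    constructor
    · intro H j hj
      have := H _ (key j hj)
      rwa [Equiv.swap_apply_self] at this
    · intro H j hj
      exact H _ (key j hj)
  · intro hc
    obtain ⟨w, hw⟩ := co_surj F n C (Pi.single ⟨k, Nat.lt_of_succ_lt h⟩ 1)
    have : w ∈ colSpan F n C (k + 1) := by
      rw [mem_colSpan, hw]
      intro i hi
      rw [Pi.single_apply, if_neg]
      rintro rfl
      simp at hi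
    rw [← hc, mem_colSpan_mk_mul, hw] at this
    have := this ⟨k + 1, h⟩ (by simp)
    rw [perm_inv_mulVec] at this
    simp at this

lemma Arel_eq (k : ℕ) (C E E' : Cosets F n) (h : Arel F n k C E) (h' : Arel F n k C E')
    (w : Fin n → F) (hw : w ∉ colSpan F n C (k + 1)) (h1 : w ∈ colSpan F n E (k + 1))
    (h2 : w ∈ colSpan F n E' (k + 1)) : E = E' := by
  have hk : w ∉ colSpan F n C k := fun hc => hw (colSpan_mono F n C (by omega) hc)
  apply colSpan_inj
  intro d _
  by_cases hd : d = k + 1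
  · subst hd
    rw [colSpan_succ F n E k w h1 (by rw [h.1 k (by omega)]; exact hk),
      colSpan_succ F n E' k w h2 (by rw [h'.1 k (by omega)]; exact hk),
      h.1 k (by omega), h'.1 k (by omega)]
  · rw [h.1 d hd, h'.1 d hd]

lemma mem_transv_iff (k : ℕ) (h : k + 1 < n) (hne) (C : Cosets F n) (t : F) (w : Fin n → F)
    (hw : w ∈ colSpan F n C (k + 2)) :
    w ∈ colSpan F n (QuotientGroup.mk (C.out * transvGL F n ⟨k + 1, h⟩ ⟨k, Nat.lt_of_succ_lt h⟩ hne t))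
      (k + 1) ↔ co F n C w ⟨k + 1, h⟩ = t * co F n C w ⟨k, Nat.lt_of_succ_lt h⟩ := by
  rw [mem_colSpan] at hw
  rw [mem_colSpan_mk_mul]
  simp only [transv_inv_mulVec]
  constructor
  · intro H
    have := H ⟨k + 1, h⟩ (by simp)
    rw [if_pos rfl] at this
    exact sub_eq_zero.mp this
  · intro H j hj
    split_ifs with hj1
    · subst hj1
      rw [H, sub_self]
    · rw [hw j, sub_zero]
      have : (j : ℕ) ≠ k + 1 := fun hc => hj1 (Fin.ext hc)
      omega

lemma mem_perm_iff (k : ℕ) (h : k + 1 < n) (C : Cosets F n) (w : Fin n → F)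
    (hw : w ∈ colSpan F n C (k + 2)) :
    w ∈ colSpan F n (QuotientGroup.mk (C.out * permGL F n
          (Equiv.swap ⟨k, Nat.lt_of_succ_lt h⟩ ⟨k + 1, h⟩)))
      (k + 1) ↔ co F n C w ⟨k, Nat.lt_of_succ_lt h⟩ = 0 := by
  rw [mem_colSpan] at hw
  rw [mem_colSpan_mk_mul]
  simp only [perm_inv_mulVec]
  constructor
  · intro H
    have := H ⟨k + 1, h⟩ (by simp)
    rwa [Equiv.swap_apply_right] at this
  · intro H j hj
    by_cases hj1 : j = ⟨k + 1, h⟩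
    · subst hj1
      rw [Equiv.swap_apply_right, H]
    · have h1 : (j : ℕ) ≠ k + 1 := fun hc => hj1 (Fin.ext hc)
      rw [Equiv.swap_apply_of_ne_of_ne _ hj1, hw j (by omega)]
      rintro rfl
      simp at hj

lemma co_ne (k : ℕ) (h : k + 1 < n) (C : Cosets F n) (w : Fin n → F)
    (hw : w ∈ colSpan F n C (k + 2)) (hw' : w ∉ colSpan F n C (k + 1)) :
    co F n C w ⟨k + 1, h⟩ ≠ 0 := by
  rw [mem_colSpan] at hw hw'
  push Not at hw'
  obtain ⟨i, hi, hne⟩ := hw'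
  have : i = ⟨k + 1, h⟩ := by
    by_contra hc
    have : (i : ℕ) ≠ k + 1 := fun hc' => hc (Fin.ext hc')
    exact hne (hw i (by omega))
  rwa [← this]

lemma Arel_exists (k : ℕ) (h : k + 1 < n) (C : Cosets F n) (w : Fin n → F)
    (hw : w ∈ colSpan F n C (k + 2)) (hw' : w ∉ colSpan F n C (k + 1)) :
    ∃ E, Arel F n k C E ∧ w ∈ colSpan F n E (k + 1) := by
  have h0 := co_ne F n k h C w hw hw'
  by_cases hk : co F n C w ⟨k, Nat.lt_of_succ_lt h⟩ = 0
  · exact ⟨_, Arel_perm F n k h C, (mem_perm_iff F n k h C w hw).2 hk⟩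
  · refine ⟨_, Arel_transv F n k h (fun hc => by simp [Fin.ext_iff] at hc) C
      (co F n C w ⟨k + 1, h⟩ / co F n C w ⟨k, Nat.lt_of_succ_lt h⟩) (div_ne_zero h0 hk),
      (mem_transv_iff F n k h _ C _ w hw).2 ?_⟩
    field_simp

lemma genGB_eq (k : ℕ) (h : k + 1 < n) (C E : Cosets F n) :
    genGB F n K k C E = if Arel F n k C E then 1 else 0 := by
  unfold genGB
  rw [dif_pos h]
  by_cases hA : Arel F n k C E
  · rw [if_pos hA]
    have hex : ∃ w, w ∈ colSpan F n E (k + 1) ∧ w ∉ colSpan F n C (k + 1) := by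
      by_contra hc
      push Not at hc
      have hle : colSpan F n E (k + 1) ≤ colSpan F n C (k + 1) := hc
      obtain ⟨a, ha⟩ := co_surj F n E (Pi.single ⟨k, Nat.lt_of_succ_lt h⟩ 1)
      have h1 : a ∈ colSpan F n E (k + 1) := by
        rw [mem_colSpan, ha]
        intro i hi
        rw [Pi.single_apply, if_neg]
        rintro rfl
        simp at hi
      have h2 : a ∉ colSpan F n E k := by
        rw [mem_colSpan, ha]
        intro H
        have := H ⟨k, Nat.lt_of_succ_lt h⟩ le_rfl
        simp at this
      apply hA.2
      rw [colSpan_succ F n E k a h1 h2, hA.1 k (by omega),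
        colSpan_succ F n C k a (hle h1) (by rwa [← hA.1 k (by omega)])]
    obtain ⟨w, hwE, hwC⟩ := hex
    have hw2 : w ∈ colSpan F n C (k + 2) := by
      rw [← hA.1 (k + 2) (by omega)]
      exact colSpan_mono F n E (by omega) hwE
    have h0 := co_ne F n k h C w hw2 hwC
    have iffP : ((QuotientGroup.mk (C.out * permGL F n
          (Equiv.swap ⟨k, Nat.lt_of_succ_lt h⟩ ⟨k + 1, h⟩)) : Cosets F n) = E)
          ↔ co F n C w ⟨k, Nat.lt_of_succ_lt h⟩ = 0 := by
      constructor
      · intro he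
        rw [← mem_perm_iff F n k h C w hw2, he]
        exact hwE
      · intro he
        exact Arel_eq F n k C _ _ (Arel_perm F n k h C) hA w hwC
          ((mem_perm_iff F n k h C w hw2).2 he) hwE
    have iffT : ∀ (hne) (t : F), (t ≠ 0 ∧ (QuotientGroup.mk (C.out * transvGL F n ⟨k + 1, h⟩ ⟨k, Nat.lt_of_succ_lt h⟩
          hne t) : Cosets F n) = E)
          ↔ co F n C w ⟨k + 1, h⟩ = t * co F n C w ⟨k, Nat.lt_of_succ_lt h⟩ := by
      intro hne t
      constructor
      · rintro ⟨_, he⟩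
        rw [← mem_transv_iff F n k h hne C t w hw2, he]
        exact hwE
      · intro he
        have ht : t ≠ 0 := by
          rintro rfl
          rw [zero_mul] at he
          exact h0 he
        exact ⟨ht, Arel_eq F n k C _ _ (Arel_transv F n k h hne C t ht) hA w hwC
          ((mem_transv_iff F n k h hne C t w hw2).2 he) hwE⟩
    simp only [iffP, iffT]
    by_cases hk : co F n C w ⟨k, Nat.lt_of_succ_lt h⟩ = 0
    · simp [hk, h0]
    · rw [if_neg hk, zero_add]
      have : (Finset.univ.filter fun t : F => co F n C w ⟨k + 1, h⟩ =
          t * co F n C w ⟨k, Nat.lt_of_succ_lt h⟩)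
          = {co F n C w ⟨k + 1, h⟩ / co F n C w ⟨k, Nat.lt_of_succ_lt h⟩} := by
        ext t
        rw [Finset.mem_filter, Finset.mem_singleton, eq_div_iff hk]
        simp [eq_comm]
      rw [this]
      simp
  · rw [if_neg hA, if_neg, zero_add, Finset.card_eq_zero.2, Nat.cast_zero]
    · apply Finset.filter_eq_empty_iff.2
      rintro t _ ⟨ht, he⟩
      exact hA (he ▸ Arel_transv F n k h _ C t ht)
    · intro he
      exact hA (he ▸ Arel_perm F n k h C)

/-- Relation describing the product `T_k ⋯ T_1`. -/
def Qrel (k : ℕ) (C D : Cosets F n) : Prop :=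
  (∀ d, 1 ≤ d → d ≤ k → colSpan F n D d = colSpan F n D 1 ⊔ colSpan F n C (d - 1)) ∧
  (∀ d, k + 1 ≤ d → colSpan F n D d = colSpan F n C d) ∧
  ¬ colSpan F n D 1 ≤ colSpan F n C k

/-- the first column -/
def col0 (hn : 0 < n) (D : Cosets F n) : Fin n → F :=
  fun r => ((D.out : GLn F n) : Matrix (Fin n) (Fin n) F) r ⟨0, hn⟩

lemma colSpan_one (hn : 0 < n) (D : Cosets F n) :
    colSpan F n D 1 = Submodule.span F {col0 F n hn D} := by
  unfold colSpan
  congr 1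
  have : {j : Fin n | (j : ℕ) < 1} = {⟨0, hn⟩} := by
    ext j
    simp [Fin.ext_iff]
  rw [this, Set.image_singleton]
  rfl

lemma col0_ne (hn : 0 < n) (D : Cosets F n) : col0 F n hn D ≠ 0 := by
  intro hc
  have h1 : (((D.out)⁻¹ : GLn F n) : Matrix (Fin n) (Fin n) F) *
      ((D.out : GLn F n) : Matrix (Fin n) (Fin n) F) = 1 := by
    rw [← Units.val_mul, inv_mul_cancel, Units.val_one]
  have := congrFun (congrFun h1 ⟨0, hn⟩) ⟨0, hn⟩
  rw [Matrix.mul_apply, Matrix.one_apply_eq, Finset.sum_eq_zero] at this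
  · exact zero_ne_one this
  · intro j _
    have : ((D.out : GLn F n) : Matrix (Fin n) (Fin n) F) j ⟨0, hn⟩ = 0 := congrFun hc j
    rw [this, mul_zero]

lemma colSpan_one_not_le_bot (hn : 0 < n) (D : Cosets F n) : ¬ colSpan F n D 1 ≤ ⊥ := by
  rw [colSpan_one F n hn, Submodule.span_singleton_le_iff_mem, Submodule.mem_bot]
  exact col0_ne F n hn D

lemma prodGenGB_eq (k : ℕ) (hk : k < n) (C D : Cosets F n) :
    prodGenGB F n K k C D = if Qrel F n k C D then 1 else 0 := by
  induction k generalizing C with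
  | zero =>
    rw [prodGenGB, Matrix.one_apply]
    congr 1
    apply propext
    constructor
    · rintro rfl
      refine ⟨fun d h1 h2 => by omega, fun d _ => rfl, ?_⟩
      rw [colSpan_zero]
      exact colSpan_one_not_le_bot F n hk C
    · intro h
      apply colSpan_inj
      intro d _
      by_cases hd : d = 0
      · rw [hd, colSpan_zero, colSpan_zero]
      · exact (h.2.1 d (by omega)).symm
  | succ k ih =>
    have hn : 0 < n := by omega
    have hL : colSpan F n D 1 = Submodule.span F {col0 F n hn D} := colSpan_one F n hn D
    have hmem : ∀ W : Submodule F (Fin n → F), colSpan F n D 1 ≤ W ↔ col0 F n hn D ∈ W := by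
      intro W
      rw [hL, Submodule.span_singleton_le_iff_mem]
    rw [prodGenGB, Matrix.mul_apply]
    simp only [genGB_eq F n K k hk, fun E => ih (by omega) E]
    have fwd : ∀ E, Arel F n k C E → Qrel F n k E D →
        Qrel F n (k + 1) C D ∧ ∀ d, colSpan F n E d =
          if d ≤ k then colSpan F n C d else colSpan F n D d := by
      intro E hA hQ
      have hD1 : col0 F n hn D ∈ colSpan F n E (k + 1) := by
        rw [← hmem, ← hQ.2.1 (k + 1) le_rfl]
        exact colSpan_mono F n D (by omega)
      have hnk : col0 F n hn D ∉ colSpan F n E k := by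
        rw [← hmem]; exact hQ.2.2
      have hEk := hA.1 k (by omega)
      have hEs := colSpan_succ F n E k _ hD1 hnk
      rw [← hL, hEk] at hEs
      refine ⟨⟨?_, ?_, ?_⟩, ?_⟩
      · intro d h1 h2
        by_cases hd : d = k + 1
        · subst hd
          rw [hQ.2.1 (k + 1) le_rfl, hEs, sup_comm]
          rfl
        · rw [hQ.1 d h1 (by omega), hA.1 (d - 1) (by omega)]
      · intro d hd
        rw [hQ.2.1 d (by omega), hA.1 d (by omega)]
      · intro hle
        apply hA.2
        rw [hEs, hL]
        rw [hEk] at hnk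
        exact (colSpan_succ F n C k _ ((hmem _).1 hle) hnk).symm
      · intro d
        split_ifs with hd
        · exact hA.1 d (by omega)
        · exact (hQ.2.1 d (by omega)).symm
    by_cases hQ : Qrel F n (k + 1) C D
    · rw [if_pos hQ]
      have hw' : col0 F n hn D ∉ colSpan F n C (k + 1) := by
        rw [← hmem]; exact hQ.2.2
      have hw : col0 F n hn D ∈ colSpan F n C (k + 2) := by
        rw [← hmem, ← hQ.2.1 (k + 2) le_rfl]
        exact colSpan_mono F n D (by omega)
      obtain ⟨E, hA, hE⟩ := Arel_exists F n k hk C _ hw hw'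
      have hCk : col0 F n hn D ∉ colSpan F n C k :=
        fun hc => hw' (colSpan_mono F n C (by omega) hc)
      have hEk := hA.1 k (by omega)
      have hEs := colSpan_succ F n E k _ hE (by rw [hEk]; exact hCk)
      rw [← hL, hEk] at hEs
      have hQE : Qrel F n k E D := by
        refine ⟨?_, ?_, ?_⟩
        · intro d h1 h2
          rw [hQ.1 d h1 (by omega), hA.1 (d - 1) (by omega)]
        · intro d hd
          by_cases hd1 : d = k + 1
          · subst hd1
            rw [hQ.1 (k + 1) (by omega) le_rfl, hEs, sup_comm]
            rfl
          · rw [hQ.2.1 d (by omega), hA.1 d hd1]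
        · rw [hmem, hEk]
          exact hCk
      rw [Finset.sum_eq_single E]
      · rw [if_pos hA, if_pos hQE, one_mul]
      · intro E' _ hne
        by_cases hA' : Arel F n k C E'
        · by_cases hQ' : Qrel F n k E' D
          · exfalso
            apply hne
            apply colSpan_inj
            intro d _
            rw [(fwd E hA hQE).2 d, (fwd E' hA' hQ').2 d]
          · rw [if_neg hQ', mul_zero]
        · rw [if_neg hA', zero_mul]
      · intro hc
        exact absurd (Finset.mem_univ _) hc
    · rw [if_neg hQ]
      refine Finset.sum_eq_zero fun E _ => ?_
      by_cases hA : Arel F n k C E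
      · rw [if_neg (fun h => hQ (fwd E hA h).1), mul_zero]
      · rw [if_neg hA, zero_mul]

/-- `D` is obtained from `C` by adding its own line. -/
def Rrel (C D : Cosets F n) : Prop :=
  ∀ d : ℕ, d ≤ n → colSpan F n D d = addLine F n (colSpan F n D 1) (colSpan F n C) d

lemma Qrel_iff (hn : 0 < n) (k : ℕ) (C D : Cosets F n) :
    Qrel F n k C D ↔ Rrel F n C D ∧ colSpan F n D 1 ≤ colSpan F n C (k + 1) ∧
      ¬ colSpan F n D 1 ≤ colSpan F n C k := by
  have hL : colSpan F n D 1 = Submodule.span F {col0 F n hn D} := colSpan_one F n hn D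
  have hmem : ∀ W : Submodule F (Fin n → F), colSpan F n D 1 ≤ W ↔ col0 F n hn D ∈ W := by
    intro W
    rw [hL, Submodule.span_singleton_le_iff_mem]
  constructor
  · intro hQ
    have h1 : colSpan F n D 1 ≤ colSpan F n C (k + 1) := by
      rw [← hQ.2.1 (k + 1) le_rfl]
      exact colSpan_mono F n D (by omega)
    refine ⟨?_, h1, hQ.2.2⟩
    intro d _
    unfold addLine
    split_ifs with hd hle
    · rw [hd, colSpan_zero]
    · apply hQ.2.1
      by_contra hc
      exact hQ.2.2 (hle.trans (colSpan_mono F n C (by omega)))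
    · by_cases hdk : d ≤ k
      · exact hQ.1 d (by omega) hdk
      · have : d = k + 1 := by
          by_contra hc
          exact hle (h1.trans (colSpan_mono F n C (by omega)))
        subst this
        rw [hQ.2.1 (k + 1) le_rfl, sup_comm, hL]
        exact colSpan_succ F n C k _ ((hmem _).1 h1) (fun hc => hQ.2.2 ((hmem _).2 hc))
  · rintro ⟨hR, h1, h2⟩
    have hkn : k < n := by
      by_contra hc
      exact h2 (by rw [colSpan_top F n C (d := k) (by omega)]; exact le_top)
    refine ⟨?_, ?_, h2⟩
    · intro d hd hdk
      rw [hR d (by omega), addLine, if_neg (by omega), if_neg]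
      intro hc
      exact h2 (hc.trans (colSpan_mono F n C (by omega)))
    · intro d hd
      by_cases hdn : d ≤ n
      · rw [hR d hdn, addLine, if_neg (by omega)]
        split_ifs with hle
        · rfl
        · have : d = k + 1 := by
            by_contra hc
            exact hle (h1.trans (colSpan_mono F n C (by omega)))
          subst this
          rw [sup_comm, hL]
          exact (colSpan_succ F n C k _ ((hmem _).1 h1) (fun hc => h2 ((hmem _).2 hc))).symm
      · rw [colSpan_top F n C (by omega), colSpan_top F n D (by omega)]

lemma sum_Qrel (hn : 0 < n) (C D : Cosets F n) :
    (∑ k ∈ Finset.range n, if Qrel F n k C D then (1 : K) else 0)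
      = if Rrel F n C D then 1 else 0 := by
  simp only [Qrel_iff F n hn]
  by_cases hR : Rrel F n C D
  · simp only [hR, true_and, if_true]
    have hex : ∃ m, colSpan F n D 1 ≤ colSpan F n C m :=
      ⟨n, by rw [colSpan_top F n C le_rfl]; exact le_top⟩
    have hspec := Nat.find_spec hex
    have hpos : Nat.find hex ≠ 0 := by
      intro hc
      rw [hc, colSpan_zero] at hspec
      exact colSpan_one_not_le_bot F n hn D hspec
    have hle : Nat.find hex ≤ n :=
      Nat.find_min' hex (by rw [colSpan_top F n C le_rfl]; exact le_top)
    obtain ⟨m, hm⟩ := Nat.exists_eq_succ_of_ne_zero hpos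
    have hmin : ¬ colSpan F n D 1 ≤ colSpan F n C m := Nat.find_min hex (by omega)
    rw [hm] at hspec
    rw [Finset.sum_eq_single m]
    · rw [if_pos ⟨hspec, hmin⟩]
    · intro b _ hb
      rw [if_neg]
      rintro ⟨h1, h2⟩
      rcases lt_or_gt_of_ne hb with h | h
      · exact hmin (h1.trans (colSpan_mono F n C (by omega)))
      · exact h2 (hspec.trans (colSpan_mono F n C (by omega)))
    · intro hc
      rw [Finset.mem_range] at hc
      omega
  · simp [hR]

/-- the line of the flag `D` -/
def lineOf (hn : 0 < n) (D : Cosets F n) : Projectivization F (Fin n → F) :=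
  Projectivization.mk F (col0 F n hn D) (col0_ne F n hn D)

lemma lineOf_submodule (hn : 0 < n) (D : Cosets F n) :
    (lineOf F n hn D).submodule = colSpan F n D 1 := by
  rw [lineOf, Projectivization.submodule_mk, colSpan_one F n hn]

lemma iOfLine_lineOf (hn : 0 < n) (D : Cosets F n) :
    iOfLine F n (lineOf F n hn D) = pivotRow F n D := by
  unfold iOfLine pivotRow
  obtain ⟨a, ha⟩ := Projectivization.exists_smul_eq_mk_rep F (col0 F n hn D) (col0_ne F n hn D)
  congr 1
  ext i
  simp only [Set.mem_setOf_eq]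
  refine exists_congr fun h => ?_
  rw [lineOf, ← ha, Pi.smul_apply, Units.smul_def, smul_eq_mul, mul_ne_zero_iff]
  simp [col0]

lemma main_entry (x : Fin n → K) (C D : Cosets F n) :
      TGB F n K x C D =
        ∑ p : Projectivization F (Fin n → F),
          lineWeight F n K x p *
            (if ∀ d : ℕ, d ≤ n →
                colSpan F n D d
                  = addLine F n (Projectivization.submodule p) (colSpan F n C) d
             then 1 else 0) := by
  rcases Nat.eq_zero_or_pos n with hn | hn
  · subst hn
    rw [TGB, Finset.range_zero, Finset.sum_empty, zero_mul, Matrix.zero_apply]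
    symm
    refine Finset.sum_eq_zero fun p _ => ?_
    rw [lineWeight, dif_neg (by omega), zero_mul]
  · have hl : TGB F n K x C D = (if Rrel F n C D then 1 else 0) *
        lineWeight F n K x (lineOf F n hn D) := by
      rw [TGB, Matrix.mul_apply, Finset.sum_eq_single D]
      · rw [Matrix.sum_apply, ← sum_Qrel F n K hn]
        congr 1
        · refine Finset.sum_congr rfl fun k hk => ?_
          exact prodGenGB_eq F n K k (Finset.mem_range.1 hk) C D
        · unfold XGB lineWeight
          simp only [iOfLine_lineOf, if_true]
      · intro E _ hE
        rw [XGB, if_neg hE.symm, mul_zero]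
      · intro hc
        exact absurd (Finset.mem_univ _) hc
    rw [hl, Finset.sum_eq_single (lineOf F n hn D)]
    · rw [lineOf_submodule, mul_comm]
      unfold Rrel
      congr 1
      split_ifs <;> rfl
    · intro p _ hp
      rw [if_neg, mul_zero]
      intro H
      apply hp
      apply Projectivization.submodule_injective
      rw [lineOf_submodule, H 1 hn, addLine, if_neg (by omega)]
      have hbot : ¬ p.submodule ≤ ⊥ := by
        rw [Projectivization.submodule_eq, Submodule.span_singleton_le_iff_mem, Submodule.mem_bot]
        exact p.rep_nonzero
      rw [Nat.sub_self, colSpan_zero, if_neg hbot, sup_bot_eq]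
    · intro hc
      exact absurd (Finset.mem_univ _) hc

/-- Let `q` be a prime power (the cardinality of the finite field `F`)
and `x` arbitrary complex weights.  Identifying cosets with complete flags via column
spans: (1) the row of `T_{G/B}(q,x)` at a flag `F` is
`∑_{lines L} (x_{i(L)}/q^{n-i(L)}) (V_0 ⊆ L ⊆ L+V_1 ⊆ ⋯ ⊆ L+V_{n-1} ⊆ V_n)ˆ`; and
(2) consequently the transition matrix of `T_{G/B}(q,x)` equals the transpose of the
matrix of the left-multiplication operator in the q-free left regular band. -/
theorem qTsetlin_flags_is_LRB (F : Type) [Field F] [Fintype F] [DecidableEq F]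
    (n : ℕ) (x : Fin n → ℂ) :
    (∀ C D : Cosets F n,
      TGB F n ℂ x C D =
        ∑ p : Projectivization F (Fin n → F),
          lineWeight F n ℂ x p *
            (if ∀ d : ℕ, d ≤ n →
                colSpan F n D d
                  = addLine F n (Projectivization.submodule p) (colSpan F n C) d
             then 1 else 0)) ∧
    TGB F n ℂ x = (leftLRBMat F n ℂ x).transpose := by
  refine ⟨fun C D => main_entry F n ℂ x C D, ?_⟩
  ext C D
  exact main_entry F n ℂ x C D

end QTsetlin
end
end

section
/- Let q be a prime power, let x_1,…,x_n be positive reals with x_1+⋯+x_n = 1, let Ψ(q,x) be the unique stationary distribution of T_{G/B}(q,x), and for π ∈ S_n let F_π denote the coset of the permutation matrix of π. Let 1 ≤ i < n and suppose x_i/q^{n−i} = x_{i+1}/q^{n−i−1}. Then for every π ∈ S_n, Ψ(q,x)_{F_π} = Ψ(q,x)_{F_{π'}}, where π' = s_i·π is obtained from π by interchanging the values i and i+1 in its one-line notation. -/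
open scoped Classical
set_option linter.unusedSectionVars false
set_option synthInstance.maxHeartbeats 1000000
set_option maxHeartbeats 1000000

noncomputable section

namespace QTsetlin

variable (F : Type) [Field F] [Fintype F] [DecidableEq F] (n : ℕ)

variable (K : Type) [Field K]

/-- `Ψ` is a stationary distribution: a nonnegative row vector with entries summing to `1`
such that `Ψ · T = c Ψ`. -/
def IsStationary {P : Type} [Fintype P] (T : Matrix P P ℝ) (c : ℝ) (Ψ : P → ℝ) : Prop :=
  (∀ p, 0 ≤ Ψ p) ∧ (∑ p, Ψ p = 1) ∧ Matrix.vecMul Ψ T = c • Ψ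

/-! ### Helper lemmas -/

lemma diag_ne_zero {b : GLn F n} (hb : b ∈ Bsub F n) (i : Fin n) :
    (b : Matrix (Fin n) (Fin n) F) i i ≠ 0 := by
  have hb' : (b : Matrix (Fin n) (Fin n) F).BlockTriangular id := hb
  have hdet : IsUnit ((b : Matrix (Fin n) (Fin n) F).det) :=
    (Matrix.isUnit_iff_isUnit_det _).mp b.isUnit
  rw [Matrix.det_of_upperTriangular hb'] at hdet
  have := hdet.ne_zero
  rw [Finset.prod_ne_zero_iff] at this
  exact this i (Finset.mem_univ _)

lemma permMat_mul_apply (π : Equiv.Perm (Fin n)) (M : Matrix (Fin n) (Fin n) F) (i j : Fin n) :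
    (permMat F n π * M) i j = M (π⁻¹ i) j := by
  rw [Matrix.mul_apply, Finset.sum_eq_single (π⁻¹ i)]
  · simp [permMat]
  · intro l _ hl
    have : π l ≠ i := by
      rintro rfl
      simp at hl
    simp [permMat, this]
  · simp

/-- nonidentity part of the minimal parabolic subgroup -/
def Rk (k : ℕ) (h : k + 1 < n) (p : GLn F n) : Prop :=
  (∀ i j : Fin n, j < i → ¬ (i.val = k + 1 ∧ j.val = k) →
    (p : Matrix (Fin n) (Fin n) F) i j = 0) ∧
  (p : Matrix (Fin n) (Fin n) F) ⟨k + 1, h⟩ ⟨k, Nat.lt_of_succ_lt h⟩ ≠ 0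

lemma swap_mem_iff (k : ℕ) (h : k + 1 < n) (p : GLn F n) :
    (permGL F n (Equiv.swap ⟨k, Nat.lt_of_succ_lt h⟩ ⟨k + 1, h⟩))⁻¹ * p ∈ Bsub F n ↔
      Rk F n k h p ∧ (p : Matrix (Fin n) (Fin n) F) ⟨k, Nat.lt_of_succ_lt h⟩
        ⟨k, Nat.lt_of_succ_lt h⟩ = 0 := by
  set s : Equiv.Perm (Fin n) := Equiv.swap ⟨k, Nat.lt_of_succ_lt h⟩ ⟨k + 1, h⟩ with hs
  have hent : ∀ i j, (((permGL F n s)⁻¹ * p : GLn F n) : Matrix (Fin n) (Fin n) F) i j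
      = (p : Matrix (Fin n) (Fin n) F) (s i) j := by
    intro i j
    have : (((permGL F n s)⁻¹ * p : GLn F n) : Matrix (Fin n) (Fin n) F)
      = permMat F n s⁻¹ * (p : Matrix (Fin n) (Fin n) F) := rfl
    rw [this, permMat_mul_apply, inv_inv]
  have hs1 : s ⟨k, Nat.lt_of_succ_lt h⟩ = ⟨k + 1, h⟩ := by simp [hs]
  have hs2 : s ⟨k + 1, h⟩ = ⟨k, Nat.lt_of_succ_lt h⟩ := by simp [hs]
  have hs3 : ∀ i : Fin n, i.val ≠ k → i.val ≠ k + 1 → s i = i := by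
    intro i h1 h2
    exact Equiv.swap_apply_of_ne_of_ne (fun e => h1 (by rw [e])) (fun e => h2 (by rw [e]))
  constructor
  · intro hb
    have hd := diag_ne_zero F n hb ⟨k, Nat.lt_of_succ_lt h⟩
    rw [hent, hs1] at hd
    have hup : ∀ i j : Fin n, j < i → (p : Matrix (Fin n) (Fin n) F) (s i) j = 0 := by
      intro i j hij
      rw [← hent]
      exact hb i j hij
    refine ⟨⟨?_, hd⟩, ?_⟩
    · intro i j hij hne
      by_cases h1 : i.val = k
      · have := hup ⟨k + 1, h⟩ j (by rw [Fin.lt_def] at *; simp; omega)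
        rw [hs2] at this
        rwa [show i = ⟨k, Nat.lt_of_succ_lt h⟩ from Fin.ext h1]
      · by_cases h2 : i.val = k + 1
        · have := hup ⟨k, Nat.lt_of_succ_lt h⟩ j (by rw [Fin.lt_def] at *; simp; omega)
          rw [hs1] at this
          rwa [show i = ⟨k + 1, h⟩ from Fin.ext h2]
        · have := hup i j hij
          rwa [hs3 i h1 h2] at this
    · have := hup ⟨k + 1, h⟩ ⟨k, Nat.lt_of_succ_lt h⟩ (by rw [Fin.lt_def]; simp)
      rwa [hs2] at this
  · rintro ⟨⟨hz, hd⟩, h0⟩ i j hij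
    rw [hent]
    by_cases h1 : i.val = k
    · rw [show i = ⟨k, Nat.lt_of_succ_lt h⟩ from Fin.ext h1, hs1]
      apply hz
      · rw [Fin.lt_def] at *; simp; omega
      · rw [Fin.lt_def] at *; simp; omega
    · by_cases h2 : i.val = k + 1
      · rw [show i = ⟨k + 1, h⟩ from Fin.ext h2, hs2]
        by_cases h3 : j.val = k
        · rwa [show j = ⟨k, Nat.lt_of_succ_lt h⟩ from Fin.ext h3]
        · apply hz
          · rw [Fin.lt_def] at *; simp; omega
          · rw [Fin.lt_def] at *; simp
      · rw [hs3 i h1 h2]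
        apply hz i j hij
        tauto

lemma transv_mem_iff (k : ℕ) (h : k + 1 < n) (p : GLn F n) (t : F) (ht : t ≠ 0)
    (hne : (⟨k + 1, h⟩ : Fin n) ≠ ⟨k, Nat.lt_of_succ_lt h⟩) :
    (transvGL F n ⟨k + 1, h⟩ ⟨k, Nat.lt_of_succ_lt h⟩ hne t)⁻¹ * p ∈ Bsub F n ↔
      Rk F n k h p ∧ (p : Matrix (Fin n) (Fin n) F) ⟨k + 1, h⟩ ⟨k, Nat.lt_of_succ_lt h⟩ =
        t * (p : Matrix (Fin n) (Fin n) F) ⟨k, Nat.lt_of_succ_lt h⟩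
        ⟨k, Nat.lt_of_succ_lt h⟩ := by
  have hmat : (((transvGL F n ⟨k + 1, h⟩ ⟨k, Nat.lt_of_succ_lt h⟩ hne t)⁻¹ * p : GLn F n) :
      Matrix (Fin n) (Fin n) F)
      = Matrix.transvection ⟨k + 1, h⟩ ⟨k, Nat.lt_of_succ_lt h⟩ (-t) *
        (p : Matrix (Fin n) (Fin n) F) := rfl
  constructor
  · intro hb
    have hd := diag_ne_zero F n hb ⟨k, Nat.lt_of_succ_lt h⟩
    rw [hmat, Matrix.transvection_mul_apply_of_ne _ _ _ _ hne.symm] at hd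
    have hup : ∀ i j : Fin n, j < i → (Matrix.transvection (⟨k + 1, h⟩ : Fin n)
        (⟨k, Nat.lt_of_succ_lt h⟩ : Fin n) (-t) * (p : Matrix (Fin n) (Fin n) F)) i j = 0 := by
      intro i j hij
      rw [← hmat]
      exact hb i j hij
    have hrow : ∀ j : Fin n, j.val < k + 1 → (p : Matrix (Fin n) (Fin n) F) ⟨k + 1, h⟩ j =
        t * (p : Matrix (Fin n) (Fin n) F) ⟨k, Nat.lt_of_succ_lt h⟩ j := by
      intro j hj
      have := hup ⟨k + 1, h⟩ j hj
      rw [Matrix.transvection_mul_apply_same] at this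
      linear_combination this
    have hz : ∀ i j : Fin n, j < i → i.val ≠ k + 1 →
        (p : Matrix (Fin n) (Fin n) F) i j = 0 := by
      intro i j hij h1
      have := hup i j hij
      rwa [Matrix.transvection_mul_apply_of_ne _ _ _ _
        (show i ≠ ⟨k + 1, h⟩ from fun e => h1 (congrArg Fin.val e))] at this
    have hkk := hrow ⟨k, Nat.lt_of_succ_lt h⟩ (by simp)
    refine ⟨⟨?_, ?_⟩, hkk⟩
    · intro i j hij hne'
      by_cases h1 : i.val = k + 1
      · rw [show i = ⟨k + 1, h⟩ from Fin.ext h1, hrow j (by rw [Fin.lt_def] at hij; omega),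
          hz _ j (by rw [Fin.lt_def] at *; simp; omega) (by simp), mul_zero]
      · exact hz i j hij h1
    · rw [hkk]
      exact mul_ne_zero ht hd
  · rintro ⟨⟨hz, hd⟩, h0⟩ i j hij
    rw [hmat]
    by_cases h1 : i.val = k + 1
    · rw [show i = ⟨k + 1, h⟩ from Fin.ext h1, Matrix.transvection_mul_apply_same]
      by_cases h3 : j.val = k
      · rw [show j = ⟨k, Nat.lt_of_succ_lt h⟩ from Fin.ext h3, h0]
        ring
      · rw [hz _ j (by rw [Fin.lt_def] at *; simp; omega) (by simp [h3]),
          hz _ j (by rw [Fin.lt_def] at *; simp; omega) (by simp)]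
        ring
    · rw [Matrix.transvection_mul_apply_of_ne _ _ _ _
        (show i ≠ ⟨k + 1, h⟩ from fun e => h1 (congrArg Fin.val e))]
      exact hz i j hij (by tauto)

lemma Rk_mul_left (k : ℕ) (h : k + 1 < n) (b p : GLn F n) (hb : b ∈ Bsub F n)
    (hp : Rk F n k h p) : Rk F n k h (b * p) := by
  obtain ⟨hz, hd⟩ := hp
  refine ⟨?_, ?_⟩
  · intro i j hij hne
    rw [Units.val_mul, Matrix.mul_apply]
    apply Finset.sum_eq_zero
    intro l _
    by_cases hl : l < i
    · rw [hb i l hl, zero_mul]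
    · rw [hz l j (by order), mul_zero]
      rw [Fin.lt_def] at *
      omega
  · rw [Units.val_mul, Matrix.mul_apply, Finset.sum_eq_single ⟨k + 1, h⟩]
    · exact mul_ne_zero (diag_ne_zero F n hb _) hd
    · intro l _ hl
      by_cases hl' : l < ⟨k + 1, h⟩
      · rw [hb _ l hl', zero_mul]
      · have : l.val ≠ k + 1 := fun e => hl (Fin.ext e)
        rw [hz l _ (by rw [Fin.lt_def] at *; simp at *; omega) (by tauto), mul_zero]
    · simp

lemma genGB_mk (k : ℕ) (h : k + 1 < n) (g g' : GLn F n) :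
    genGB F n ℝ k (QuotientGroup.mk g) (QuotientGroup.mk g') =
      if Rk F n k h (g⁻¹ * g') then 1 else 0 := by
  obtain ⟨b, hb⟩ := QuotientGroup.mk_out_eq_mul (Bsub F n) g
  have hR : Rk F n k h (g⁻¹ * g') ↔ Rk F n k h ((g * (b : GLn F n))⁻¹ * g') := by
    have e : (g * (b : GLn F n))⁻¹ * g' = (b : GLn F n)⁻¹ * (g⁻¹ * g') := by group
    rw [e]
    constructor
    · intro hp
      exact Rk_mul_left F n k h _ _ (inv_mem b.2) hp
    · intro hp
      have := Rk_mul_left F n k h _ _ b.2 hp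
      rwa [mul_inv_cancel_left] at this
  have key : ∀ g₁ : GLn F n, ((if (QuotientGroup.mk (g₁ * permGL F n
          (Equiv.swap ⟨k, Nat.lt_of_succ_lt h⟩ ⟨k + 1, h⟩)) : Cosets F n) =
            QuotientGroup.mk g' then (1 : ℝ) else 0)
    + ((Finset.univ.filter fun t : F => t ≠ 0 ∧
        (QuotientGroup.mk (g₁ * transvGL F n ⟨k + 1, h⟩ ⟨k, Nat.lt_of_succ_lt h⟩
          (fun hc => by simp [Fin.ext_iff] at hc) t) : Cosets F n) =
            QuotientGroup.mk g').card : ℝ)) =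
      if Rk F n k h (g₁⁻¹ * g') then 1 else 0 := by
    intro g₁
    simp only [QuotientGroup.eq, mul_inv_rev, mul_assoc]
    rw [swap_mem_iff]
    have hf : (Finset.univ.filter fun t : F => t ≠ 0 ∧
        (transvGL F n ⟨k + 1, h⟩ ⟨k, Nat.lt_of_succ_lt h⟩
          (fun hc => by simp [Fin.ext_iff] at hc) t)⁻¹ * (g₁⁻¹ * g') ∈ Bsub F n) =
        (Finset.univ.filter fun t : F => t ≠ 0 ∧ (Rk F n k h (g₁⁻¹ * g') ∧
          ((g₁⁻¹ * g' : GLn F n) : Matrix (Fin n) (Fin n) F) ⟨k + 1, h⟩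
            ⟨k, Nat.lt_of_succ_lt h⟩ =
        t * ((g₁⁻¹ * g' : GLn F n) : Matrix (Fin n) (Fin n) F) ⟨k, Nat.lt_of_succ_lt h⟩
        ⟨k, Nat.lt_of_succ_lt h⟩)) := by
      apply Finset.filter_congr
      intro t _
      by_cases ht : t = 0
      · simp [ht]
      · rw [transv_mem_iff F n k h _ t ht]
    rw [hf]
    generalize g₁⁻¹ * g' = p
    by_cases hp : Rk F n k h p
    · have hd := hp.2
      by_cases h0 : (p : Matrix (Fin n) (Fin n) F) ⟨k, Nat.lt_of_succ_lt h⟩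
        ⟨k, Nat.lt_of_succ_lt h⟩ = 0
      · simp [hp, h0, hd]
      · have : (Finset.univ.filter fun t : F => t ≠ 0 ∧ (Rk F n k h p ∧
          (p : Matrix (Fin n) (Fin n) F) ⟨k + 1, h⟩ ⟨k, Nat.lt_of_succ_lt h⟩ =
        t * (p : Matrix (Fin n) (Fin n) F) ⟨k, Nat.lt_of_succ_lt h⟩
        ⟨k, Nat.lt_of_succ_lt h⟩)) = {(p : Matrix (Fin n) (Fin n) F) ⟨k + 1, h⟩
          ⟨k, Nat.lt_of_succ_lt h⟩ / (p : Matrix (Fin n) (Fin n) F)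
            ⟨k, Nat.lt_of_succ_lt h⟩ ⟨k, Nat.lt_of_succ_lt h⟩} := by
          ext t
          simp only [Finset.mem_filter, Finset.mem_univ, true_and, hp, Finset.mem_singleton]
          rw [eq_div_iff h0]
          constructor
          · rintro ⟨_, e⟩
            exact e.symm
          · intro e
            refine ⟨?_, e.symm⟩
            rintro rfl
            rw [zero_mul] at e
            exact hd e.symm
        rw [this]
        simp [hp, h0]
    · simp [hp]
  have hunf : genGB F n ℝ k (QuotientGroup.mk g) (QuotientGroup.mk g') = _ :=
    dif_pos h
  rw [hunf, key, hb]
  by_cases hp : Rk F n k h (g⁻¹ * g')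
  · rw [if_pos hp, if_pos (hR.mp hp)]
  · rw [if_neg hp, if_neg (fun hc => hp (hR.mpr hc))]

lemma genGB_equiv (k : ℕ) (s : GLn F n) :
    (genGB F n ℝ k).submatrix (MulAction.toPerm s : Equiv.Perm (Cosets F n))
      (MulAction.toPerm s : Equiv.Perm (Cosets F n)) = genGB F n ℝ k := by
  ext C D
  by_cases h : k + 1 < n
  · induction C using QuotientGroup.induction_on with | _ g =>
    induction D using QuotientGroup.induction_on with | _ g' =>
    show genGB F n ℝ k (QuotientGroup.mk (s * g)) (QuotientGroup.mk (s * g')) = _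
    rw [genGB_mk F n k h, genGB_mk F n k h]
    have : (s * g)⁻¹ * (s * g') = g⁻¹ * g' := by group
    rw [this]
  · simp [genGB, h]

lemma prodGenGB_equiv (k : ℕ) (s : GLn F n) :
    (prodGenGB F n ℝ k).submatrix (MulAction.toPerm s : Equiv.Perm (Cosets F n))
      (MulAction.toPerm s : Equiv.Perm (Cosets F n)) = prodGenGB F n ℝ k := by
  induction k with
  | zero => simp [prodGenGB]
  | succ k ih =>
    rw [prodGenGB, ← Matrix.submatrix_mul_equiv _ _ _
      (MulAction.toPerm s : Equiv.Perm (Cosets F n)), ih, genGB_equiv]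

lemma pivotRow_mk (g : GLn F n) :
    pivotRow F n (QuotientGroup.mk g) = sInf {i : ℕ | ∃ h : i < n,
      (g : Matrix (Fin n) (Fin n) F) ⟨i, h⟩
        ⟨0, Nat.lt_of_le_of_lt (Nat.zero_le i) h⟩ ≠ 0} := by
  obtain ⟨b, hb⟩ := QuotientGroup.mk_out_eq_mul (Bsub F n) g
  unfold pivotRow
  rw [hb]
  congr 1
  ext i
  simp only [Set.mem_setOf_eq]
  apply exists_congr
  intro h
  have : ((g * (b : GLn F n) : GLn F n) : Matrix (Fin n) (Fin n) F) ⟨i, h⟩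
        ⟨0, Nat.lt_of_le_of_lt (Nat.zero_le i) h⟩ = (g : Matrix (Fin n) (Fin n) F) ⟨i, h⟩
        ⟨0, Nat.lt_of_le_of_lt (Nat.zero_le i) h⟩ * ((b : GLn F n) : Matrix (Fin n) (Fin n) F)
          ⟨0, Nat.lt_of_le_of_lt (Nat.zero_le i) h⟩
          ⟨0, Nat.lt_of_le_of_lt (Nat.zero_le i) h⟩ := by
    rw [Units.val_mul, Matrix.mul_apply, Finset.sum_eq_single]
    · intro l _ hl
      rw [b.2 l _ (by
        rw [Fin.lt_def]
        have : l.val ≠ 0 := fun e => hl (Fin.ext e)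
        simp; omega), mul_zero]
    · simp
  rw [this]
  have hd := diag_ne_zero F n b.2 ⟨0, Nat.lt_of_le_of_lt (Nat.zero_le i) h⟩
  simp [hd]

lemma pivotRow_spec (hn : 0 < n) (g : GLn F n) :
    ∃ h : pivotRow F n (QuotientGroup.mk g) < n,
      (g : Matrix (Fin n) (Fin n) F) ⟨_, h⟩ ⟨0, hn⟩ ≠ 0 ∧
      ∀ i : Fin n, i.val < pivotRow F n (QuotientGroup.mk g) →
        (g : Matrix (Fin n) (Fin n) F) i ⟨0, hn⟩ = 0 := by
  have hne : {i : ℕ | ∃ h : i < n, (g : Matrix (Fin n) (Fin n) F) ⟨i, h⟩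
        ⟨0, Nat.lt_of_le_of_lt (Nat.zero_le i) h⟩ ≠ 0}.Nonempty := by
    by_contra hc
    have hall : ∀ i : Fin n, (g : Matrix (Fin n) (Fin n) F) i ⟨0, hn⟩ = 0 := by
      intro i
      by_contra h0
      exact hc ⟨i.val, i.2, h0⟩
    have hdet : IsUnit ((g : Matrix (Fin n) (Fin n) F).det) :=
      (Matrix.isUnit_iff_isUnit_det _).mp g.isUnit
    exact hdet.ne_zero (Matrix.det_eq_zero_of_column_eq_zero ⟨0, hn⟩ hall)
  have hmem := Nat.sInf_mem hne
  rw [← pivotRow_mk] at hmem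
  obtain ⟨h, h'⟩ := hmem
  refine ⟨h, h', ?_⟩
  intro i hi
  by_contra h0
  rw [pivotRow_mk] at hi
  exact Nat.notMem_of_lt_sInf hi ⟨i.2, h0⟩

lemma pivotRow_eq (hn : 0 < n) (g : GLn F n) (r : Fin n)
    (h1 : (g : Matrix (Fin n) (Fin n) F) r ⟨0, hn⟩ ≠ 0)
    (h2 : ∀ i : Fin n, i < r → (g : Matrix (Fin n) (Fin n) F) i ⟨0, hn⟩ = 0) :
    pivotRow F n (QuotientGroup.mk g) = r.val := by
  obtain ⟨h, ha, hb⟩ := pivotRow_spec F n hn g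
  rcases lt_trichotomy (pivotRow F n (QuotientGroup.mk g)) r.val with hl | hl | hl
  · exact absurd (h2 ⟨_, h⟩ hl) ha
  · exact hl
  · exact absurd (hb r hl) h1

/-- the weight of a coset -/
def wt (x : Fin n → ℝ) (C : Cosets F n) : ℝ :=
  if h : pivotRow F n C < n then
      x ⟨pivotRow F n C, h⟩ / (Fintype.card F : ℝ) ^ (n - 1 - pivotRow F n C)
    else 0

lemma XGB_eq (x : Fin n → ℝ) : XGB F n ℝ x = Matrix.diagonal (wt F n x) := by
  ext C D
  simp only [XGB, Matrix.diagonal_apply, wt, eq_comm]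

lemma wt_pos (hn : 0 < n) (x : Fin n → ℝ) (hx : ∀ i, 0 < x i) (C : Cosets F n) :
    0 < wt F n x C := by
  induction C using QuotientGroup.induction_on with | _ g =>
  obtain ⟨h, -⟩ := pivotRow_spec F n hn g
  have hc : 0 < (Fintype.card F : ℝ) := by exact_mod_cast Fintype.card_pos
  unfold wt
  rw [dif_pos h]
  exact div_pos (hx _) (pow_pos hc _)

lemma wt_of_pivot (x : Fin n → ℝ) (C : Cosets F n) (r : Fin n)
    (h : pivotRow F n C = r.val) :
    wt F n x C = x r / (Fintype.card F : ℝ) ^ (n - 1 - r.val) := by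
  unfold wt
  rw [dif_pos (h ▸ r.2)]
  simp only [h]

lemma wt_swap (x : Fin n → ℝ) (i₀ : ℕ) (hi : i₀ + 1 < n)
    (hy : x ⟨i₀, Nat.lt_of_succ_lt hi⟩ / (Fintype.card F : ℝ) ^ (n - 1 - i₀)
        = x ⟨i₀ + 1, hi⟩ / (Fintype.card F : ℝ) ^ (n - 1 - (i₀ + 1)))
    (g : GLn F n) :
    wt F n x (QuotientGroup.mk (permGL F n
      (Equiv.swap ⟨i₀, Nat.lt_of_succ_lt hi⟩ ⟨i₀ + 1, hi⟩) * g)) =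
      wt F n x (QuotientGroup.mk g) := by
  have hn : 0 < n := by omega
  set s : Equiv.Perm (Fin n) := Equiv.swap ⟨i₀, Nat.lt_of_succ_lt hi⟩ ⟨i₀ + 1, hi⟩ with hs
  have hent : ∀ i j, ((permGL F n s * g : GLn F n) : Matrix (Fin n) (Fin n) F) i j
      = (g : Matrix (Fin n) (Fin n) F) (s i) j := by
    intro i j
    have : ((permGL F n s * g : GLn F n) : Matrix (Fin n) (Fin n) F)
      = permMat F n s * (g : Matrix (Fin n) (Fin n) F) := rfl
    rw [this, permMat_mul_apply, hs, Equiv.swap_inv]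
  have hs1 : s ⟨i₀, Nat.lt_of_succ_lt hi⟩ = ⟨i₀ + 1, hi⟩ := by simp [hs]
  have hs2 : s ⟨i₀ + 1, hi⟩ = ⟨i₀, Nat.lt_of_succ_lt hi⟩ := by simp [hs]
  have hs3 : ∀ i : Fin n, i.val ≠ i₀ → i.val ≠ i₀ + 1 → s i = i := by
    intro i h1 h2
    exact Equiv.swap_apply_of_ne_of_ne (fun e => h1 (by rw [e])) (fun e => h2 (by rw [e]))
  obtain ⟨h, ha, hb⟩ := pivotRow_spec F n hn g
  obtain ⟨r, hr⟩ : ∃ r : Fin n, pivotRow F n (QuotientGroup.mk g) = r.val := ⟨⟨_, h⟩, rfl⟩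
  have ha' : (g : Matrix (Fin n) (Fin n) F) r ⟨0, hn⟩ ≠ 0 := by
    have e : (⟨_, h⟩ : Fin n) = r := Fin.ext hr
    rwa [e] at ha
  rw [hr] at hb
  rw [wt_of_pivot F n x _ r hr]
  by_cases h1 : r.val = i₀
  · have er : r = ⟨i₀, Nat.lt_of_succ_lt hi⟩ := Fin.ext h1
    subst er
    by_cases h0 : (g : Matrix (Fin n) (Fin n) F) ⟨i₀ + 1, hi⟩ ⟨0, hn⟩ = 0
    · rw [wt_of_pivot F n x _ ⟨i₀ + 1, hi⟩]
      · exact hy.symm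
      · apply pivotRow_eq F n hn
        · rwa [hent, hs2]
        · intro i hi'
          rw [hent]
          by_cases h2 : i.val = i₀
          · rwa [show i = ⟨i₀, Nat.lt_of_succ_lt hi⟩ from Fin.ext h2, hs1]
          · rw [Fin.lt_def] at hi'
            simp only at hi'
            rw [hs3 i h2 (by omega)]
            exact hb i (by simp only; omega)
    · rw [wt_of_pivot F n x _ ⟨i₀, Nat.lt_of_succ_lt hi⟩]
      apply pivotRow_eq F n hn
      · rwa [hent, hs1]
      · intro i hi'
        rw [Fin.lt_def] at hi'
        simp only at hi'
        rw [hent, hs3 i (by omega) (by omega)]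
        exact hb i (by simp only; omega)
  · by_cases h2 : r.val = i₀ + 1
    · have er : r = ⟨i₀ + 1, hi⟩ := Fin.ext h2
      subst er
      rw [wt_of_pivot F n x _ ⟨i₀, Nat.lt_of_succ_lt hi⟩]
      · exact hy
      · apply pivotRow_eq F n hn
        · rwa [hent, hs1]
        · intro i hi'
          rw [Fin.lt_def] at hi'
          simp only at hi'
          rw [hent, hs3 i (by omega) (by omega)]
          exact hb i (by simp only; omega)
    · rw [wt_of_pivot F n x _ r]
      apply pivotRow_eq F n hn
      · rwa [hent, hs3 r h1 h2]
      · intro i hi'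
        rw [Fin.lt_def] at hi'
        rw [hent]
        by_cases h3 : i.val = i₀
        · rw [show i = ⟨i₀, Nat.lt_of_succ_lt hi⟩ from Fin.ext h3, hs1]
          exact hb _ (by simp only; omega)
        · by_cases h4 : i.val = i₀ + 1
          · rw [show i = ⟨i₀ + 1, hi⟩ from Fin.ext h4, hs2]
            exact hb _ (by simp only; omega)
          · rw [hs3 i h3 h4]
            exact hb i hi'

lemma TGB_swap (x : Fin n → ℝ) (i₀ : ℕ) (hi : i₀ + 1 < n)
    (hy : x ⟨i₀, Nat.lt_of_succ_lt hi⟩ / (Fintype.card F : ℝ) ^ (n - 1 - i₀)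
        = x ⟨i₀ + 1, hi⟩ / (Fintype.card F : ℝ) ^ (n - 1 - (i₀ + 1)))
    (e : Equiv.Perm (Cosets F n)) (he : e = MulAction.toPerm (permGL F n
      (Equiv.swap ⟨i₀, Nat.lt_of_succ_lt hi⟩ ⟨i₀ + 1, hi⟩))) :
    (TGB F n ℝ x).submatrix e e = TGB F n ℝ x := by
  have hX : (XGB F n ℝ x).submatrix e e = XGB F n ℝ x := by
    rw [XGB_eq, Matrix.submatrix_diagonal_equiv]
    congr 1
    funext C
    induction C using QuotientGroup.induction_on with | _ g =>
    rw [he]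
    exact wt_swap F n x i₀ hi hy g
  have hS : (∑ k ∈ Finset.range n, prodGenGB F n ℝ k).submatrix e e =
      ∑ k ∈ Finset.range n, prodGenGB F n ℝ k := by
    ext C D
    rw [Matrix.submatrix_apply, Matrix.sum_apply, Matrix.sum_apply]
    apply Finset.sum_congr rfl
    intro k _
    rw [he]
    exact congrFun (congrFun (prodGenGB_equiv F n k _) C) D
  unfold TGB
  rw [← Matrix.submatrix_mul_equiv _ _ _ e, hX, hS]

lemma genGB_nonneg (k : ℕ) (C D : Cosets F n) : 0 ≤ genGB F n ℝ k C D := by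
  unfold genGB
  split_ifs <;> positivity

lemma prodGenGB_nonneg (k : ℕ) (C D : Cosets F n) : 0 ≤ prodGenGB F n ℝ k C D := by
  induction k generalizing C D with
  | zero =>
    rw [prodGenGB, Matrix.one_apply]
    split_ifs <;> norm_num
  | succ k ih =>
    rw [prodGenGB, Matrix.mul_apply]
    exact Finset.sum_nonneg fun E _ => mul_nonneg (genGB_nonneg F n k C E) (ih E D)

/-- adjacent transposition (or identity out of range) -/
def adj (k : ℕ) : Equiv.Perm (Fin n) :=
  if h : k + 1 < n then Equiv.swap ⟨k, Nat.lt_of_succ_lt h⟩ ⟨k + 1, h⟩ else 1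

/-- the cycles -/
def cyc : ℕ → Equiv.Perm (Fin n)
  | 0 => 1
  | k + 1 => adj n k * cyc k

/-- permutation matrices as a homomorphism -/
def permHom : Equiv.Perm (Fin n) →* GLn F n where
  toFun := permGL F n
  map_one' := Units.ext (permMat_one F n)
  map_mul' π σ := Units.ext (permMat_mul F n π σ).symm

lemma genGB_pos (k : ℕ) (h : k + 1 < n) (g : GLn F n) :
    0 < genGB F n ℝ k (QuotientGroup.mk g) (QuotientGroup.mk (g * permHom F n (adj n k))) := by
  rw [genGB_mk F n k h, if_pos]
  · norm_num
  · rw [inv_mul_cancel_left]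
    refine ((swap_mem_iff F n k h _).mp ?_).1
    have : permHom F n (adj n k) = permGL F n
      (Equiv.swap ⟨k, Nat.lt_of_succ_lt h⟩ ⟨k + 1, h⟩) := by
      simp only [adj, dif_pos h]
      rfl
    rw [this, inv_mul_cancel]
    exact one_mem _

lemma prodGenGB_pos (k : ℕ) (h : k < n) (g : GLn F n) :
    0 < prodGenGB F n ℝ k (QuotientGroup.mk g)
      (QuotientGroup.mk (g * permHom F n (cyc n k))) := by
  induction k generalizing g with
  | zero =>
    rw [cyc, map_one, mul_one, prodGenGB, Matrix.one_apply_eq]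
    norm_num
  | succ k ih =>
    rw [prodGenGB, Matrix.mul_apply]
    refine lt_of_lt_of_le ?_ (Finset.single_le_sum
      (fun E _ => mul_nonneg (genGB_nonneg F n k _ E) (prodGenGB_nonneg F n k E _))
      (Finset.mem_univ (QuotientGroup.mk (g * permHom F n (adj n k)))))
    apply mul_pos (genGB_pos F n k h g)
    have := ih (by omega) (g * permHom F n (adj n k))
    rwa [mul_assoc, ← map_mul] at this

lemma TGB_apply (x : Fin n → ℝ) (C D : Cosets F n) :
    TGB F n ℝ x C D = (∑ k ∈ Finset.range n, prodGenGB F n ℝ k C D) * wt F n x D := by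
  rw [TGB, XGB_eq, Matrix.mul_diagonal, Matrix.sum_apply]

lemma TGB_nonneg (hn : 0 < n) (x : Fin n → ℝ) (hx : ∀ i, 0 < x i) (C D : Cosets F n) :
    0 ≤ TGB F n ℝ x C D := by
  rw [TGB_apply]
  exact mul_nonneg (Finset.sum_nonneg fun k _ => prodGenGB_nonneg F n k C D)
    (wt_pos F n hn x hx D).le

lemma TGB_pos (hn : 0 < n) (x : Fin n → ℝ) (hx : ∀ i, 0 < x i) (k : ℕ) (hk : k < n)
    (g : GLn F n) :
    0 < TGB F n ℝ x (QuotientGroup.mk g) (QuotientGroup.mk (g * permHom F n (cyc n k))) := by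
  rw [TGB_apply]
  refine mul_pos (lt_of_lt_of_le (prodGenGB_pos F n k hk g) ?_) (wt_pos F n hn x hx _)
  exact Finset.single_le_sum (f := fun j => prodGenGB F n ℝ j (QuotientGroup.mk g)
    (QuotientGroup.mk (g * permHom F n (cyc n k))))
    (fun j _ => prodGenGB_nonneg F n j _ _) (Finset.mem_range.mpr hk)

/-- A subgroup containing `B` and all the cycles is everything. -/
lemma subgroup_top (H : Subgroup (GLn F n)) (hB : Bsub F n ≤ H)
    (hc : ∀ k, k < n → permHom F n (cyc n k) ∈ H) (g : GLn F n) : g ∈ H := by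
  have hadj : ∀ k, k + 1 < n → permHom F n (adj n k) ∈ H := by
    intro k hk
    have := H.mul_mem (hc (k + 1) hk) (H.inv_mem (hc k (by omega)))
    rwa [cyc, map_mul, mul_inv_cancel_right] at this
  have hperm : ∀ π : Equiv.Perm (Fin n), permHom F n π ∈ H := by
    intro π
    rcases n with _ | m
    · have : π = 1 := Subsingleton.elim _ _
      rw [this, map_one]
      exact one_mem _
    · have hle : Submonoid.closure (Set.range fun i : Fin m =>
          Equiv.swap i.castSucc i.succ) ≤ (H.comap (permHom F (m + 1))).toSubmonoid := by
        rw [Submonoid.closure_le]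
        rintro _ ⟨i, rfl⟩
        have := hadj i.val (by omega)
        simp only [adj, dif_pos (show i.val + 1 < m + 1 by omega)] at this
        exact this
      rw [Equiv.Perm.mclosure_swap_castSucc_succ] at hle
      exact hle (Submonoid.mem_top π)
  have hdet : (g : Matrix (Fin n) (Fin n) F).det ≠ 0 :=
    ((Matrix.isUnit_iff_isUnit_det _).mp g.isUnit).ne_zero
  refine Matrix.diagonal_transvection_induction_of_det_ne_zero
    (fun M => ∀ g : GLn F n, (g : Matrix (Fin n) (Fin n) F) = M → g ∈ H) _ hdet
    ?_ ?_ ?_ g rfl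
  · intro D _ g hg
    apply hB
    intro i j hij
    rw [hg, Matrix.diagonal_apply_ne _ hij.ne']
  · have hup : ∀ (i j : Fin n) (hij : i ≠ j) (t : F), i < j → transvGL F n i j hij t ∈ H := by
      intro i j hij t hlt
      apply hB
      intro a b hab
      show Matrix.transvection i j t a b = 0
      rw [Matrix.transvection, Matrix.add_apply, Matrix.one_apply_ne hab.ne',
        Matrix.single_apply_of_ne, add_zero]
      rintro ⟨rfl, rfl⟩
      order
    rintro ⟨i, j, hij, t⟩ g hg
    have hg' : g = transvGL F n i j hij t := Units.ext hg
    rcases lt_or_gt_of_ne hij with hlt | hlt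
    · rw [hg']
      exact hup i j hij t hlt
    · have : g = (permHom F n (Equiv.swap i j))⁻¹ * transvGL F n j i hij.symm t *
          permHom F n (Equiv.swap i j) := by
        rw [mul_assoc, eq_inv_mul_iff_mul_eq, hg']
        apply Units.ext
        show permMat F n _ * Matrix.transvection i j t =
          Matrix.transvection j i t * permMat F n _
        rw [Matrix.transvection, Matrix.transvection, mul_add, add_mul, mul_one, one_mul]
        congr 1
        ext a b
        rw [permMat_mul_apply, Matrix.mul_apply, Finset.sum_eq_single i]
        · simp only [Matrix.single_apply, permMat, Equiv.swap_inv]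
          have h1 : i = Equiv.swap i j a ↔ j = a := by
            constructor
            · intro h
              have h' := congrArg (Equiv.swap i j) h
              rwa [Equiv.swap_apply_left, Equiv.swap_apply_self] at h'
            · rintro rfl
              simp
          have h2 : Equiv.swap i j b = i ↔ j = b := by
            constructor
            · intro h
              have h' := congrArg (Equiv.swap i j) h
              rw [Equiv.swap_apply_left, Equiv.swap_apply_self] at h'
              exact h'.symm
            · rintro rfl
              simp
          simp only [h1, h2]
          by_cases ha : j = a <;> by_cases hb : j = b <;> simp [ha, hb]
        · intro l _ hl
          rw [Matrix.single_apply_of_ne, zero_mul]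
          rintro ⟨_, h⟩
          exact hl h.symm
        · simp
      rw [this]
      exact H.mul_mem (H.mul_mem (H.inv_mem (hperm _)) (hup _ _ _ _ hlt)) (hperm _)
  · intro A A' hA hA' ihA ihA' g hg
    have e : g = Matrix.GeneralLinearGroup.mkOfDetNeZero A hA *
        Matrix.GeneralLinearGroup.mkOfDetNeZero A' hA' := Units.ext hg
    rw [e]
    exact H.mul_mem (ihA _ rfl) (ihA' _ rfl)

/-- A nonnegative left eigenvector which is positive somewhere is positive everywhere. -/
lemma pos_of_pos (hn : 0 < n) (x : Fin n → ℝ) (hx : ∀ i, 0 < x i)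
    (Ψ : Cosets F n → ℝ) (h0 : ∀ C, 0 ≤ Ψ C) (hT : Matrix.vecMul Ψ (TGB F n ℝ x) = Ψ)
    (C : Cosets F n) (hC : 0 < Ψ C) (D : Cosets F n) : 0 < Ψ D := by
  have step : ∀ k, k < n → ∀ g : GLn F n, 0 < Ψ (QuotientGroup.mk g) →
      0 < Ψ (QuotientGroup.mk (g * permHom F n (cyc n k))) := by
    intro k hk g hg
    rw [← hT]
    refine lt_of_lt_of_le (mul_pos hg (TGB_pos F n hn x hx k hk g)) ?_
    exact Finset.single_le_sum (f := fun E => Ψ E * TGB F n ℝ x E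
      (QuotientGroup.mk (g * permHom F n (cyc n k))))
      (fun E _ => mul_nonneg (h0 E) (TGB_nonneg F n hn x hx E _)) (Finset.mem_univ _)
  let M : Submonoid (GLn F n) :=
    { carrier := {h | ∀ g : GLn F n, 0 < Ψ (QuotientGroup.mk g) →
        0 < Ψ (QuotientGroup.mk (g * h))}
      one_mem' := by
        intro g hg
        rwa [mul_one]
      mul_mem' := by
        intro a b ha hb g hg
        rw [← mul_assoc]
        exact hb _ (ha _ hg) }
  let H : Subgroup (GLn F n) :=
    { M with
      inv_mem' := by
        intro h hh
        have h1 : h⁻¹ ∈ Submonoid.powers h := by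
          rw [mem_powers_iff_mem_zpowers]
          exact inv_mem (Subgroup.mem_zpowers h)
        obtain ⟨m, hm⟩ := h1
        have h2 : h ^ m ∈ M := M.pow_mem hh m
        have hm' : h ^ m = h⁻¹ := hm
        rw [hm'] at h2
        exact h2 }
  have hall : ∀ g, g ∈ H := by
    apply subgroup_top F n H
    · intro b hb g hg
      have : (QuotientGroup.mk (g * b) : Cosets F n) = QuotientGroup.mk g :=
        QuotientGroup.mk_mul_of_mem g hb
      rwa [this]
    · intro k hk g hg
      exact step k hk g hg
  induction C using QuotientGroup.induction_on with | _ g =>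
  induction D using QuotientGroup.induction_on with | _ g' =>
  have := hall (g⁻¹ * g') g hC
  rwa [mul_inv_cancel_left] at this

lemma stationary_unique (hn : 0 < n) (x : Fin n → ℝ) (hx : ∀ i, 0 < x i)
    (Ψ Φ : Cosets F n → ℝ) (h1 : IsStationary (TGB F n ℝ x) 1 Ψ)
    (h2 : IsStationary (TGB F n ℝ x) 1 Φ) : Ψ = Φ := by
  obtain ⟨hΨ0, hΨ1, hΨT⟩ := h1
  obtain ⟨hΦ0, hΦ1, hΦT⟩ := h2
  rw [one_smul] at hΨT hΦT
  have hpos : ∀ C, 0 < Ψ C := by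
    have : ∃ C ∈ Finset.univ, 0 < Ψ C := by
      apply Finset.exists_lt_of_sum_lt (f := fun _ : Cosets F n => (0 : ℝ))
      rw [hΨ1]
      simp
    obtain ⟨C, -, hC⟩ := this
    exact fun D => pos_of_pos F n hn x hx Ψ hΨ0 hΨT C hC D
  obtain ⟨C₀, -, hmin⟩ := Finset.exists_min_image (Finset.univ : Finset (Cosets F n))
    (fun C => Φ C / Ψ C) ⟨QuotientGroup.mk 1, Finset.mem_univ _⟩
  set r := Φ C₀ / Ψ C₀ with hr
  have hD0 : ∀ C, 0 ≤ (Φ - r • Ψ) C := by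
    intro C
    have := hmin C (Finset.mem_univ _)
    rw [le_div_iff₀ (hpos C)] at this
    simp only [Pi.sub_apply, Pi.smul_apply, smul_eq_mul]
    linarith
  have hDT : Matrix.vecMul (Φ - r • Ψ) (TGB F n ℝ x) = Φ - r • Ψ := by
    rw [Matrix.sub_vecMul, Matrix.smul_vecMul, hΨT, hΦT]
  have hC0 : (Φ - r • Ψ) C₀ = 0 := by
    simp only [Pi.sub_apply, Pi.smul_apply, smul_eq_mul, hr]
    rw [div_mul_cancel₀ _ (hpos C₀).ne', sub_self]
  have hzero : ∀ C, (Φ - r • Ψ) C = 0 := by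
    intro C
    by_contra hne
    have := pos_of_pos F n hn x hx _ hD0 hDT C (lt_of_le_of_ne (hD0 C) (Ne.symm hne)) C₀
    exact this.ne' hC0
  have hz : ∀ C, Φ C = r * Ψ C := by
    intro C
    have := hzero C
    simp only [Pi.sub_apply, Pi.smul_apply, smul_eq_mul] at this
    linarith
  have hr1 : r = 1 := by
    have : ∑ C, Φ C = r * ∑ C, Ψ C := by
      rw [Finset.mul_sum]
      exact Finset.sum_congr rfl fun C _ => hz C
    rw [hΨ1, hΦ1] at this
    linarith
  funext C
  rw [hz C, hr1, one_mul]

/-- Let `q` be a prime power (the cardinality of the finite field `F`)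
and `x` positive weights summing to `1`. Suppose the paper's 1-based values `i` and `i+1`
(0-based `i₀` and `i₀+1`) satisfy `x_i / q^{n-i} = x_{i+1} / q^{n-i-1}`.  Then any
stationary distribution of `T_{G/B}(q,x)` takes the same value on the permutation-matrix
cosets `F_π` and `F_{π'}`, where `π' = s_i π` interchanges the values `i` and `i+1`. -/
theorem stationary_value_swap (F : Type) [Field F] [Fintype F] [DecidableEq F]
    (n : ℕ) (x : Fin n → ℝ) (hx : ∀ i, 0 < x i) (hx1 : ∑ i, x i = 1)
    (i₀ : ℕ) (hi : i₀ + 1 < n)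
    (hy : x ⟨i₀, Nat.lt_of_succ_lt hi⟩ / (Fintype.card F : ℝ) ^ (n - 1 - i₀)
        = x ⟨i₀ + 1, hi⟩ / (Fintype.card F : ℝ) ^ (n - 1 - (i₀ + 1)))
    (Ψ : Cosets F n → ℝ) (hΨ : IsStationary (TGB F n ℝ x) (∑ i, x i) Ψ)
    (π : Equiv.Perm (Fin n)) :
    Ψ (QuotientGroup.mk (permGL F n π)) =
      Ψ (QuotientGroup.mk (permGL F n
        (Equiv.swap ⟨i₀, Nat.lt_of_succ_lt hi⟩ ⟨i₀ + 1, hi⟩ * π))) := by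
  rw [hx1] at hΨ
  have hn : 0 < n := by omega
  obtain ⟨h0, h1, hT⟩ := hΨ
  let e : Equiv.Perm (Cosets F n) := MulAction.toPerm (permGL F n
    (Equiv.swap ⟨i₀, Nat.lt_of_succ_lt hi⟩ ⟨i₀ + 1, hi⟩))
  have hsub := TGB_swap F n x i₀ hi hy e rfl
  have hst : IsStationary (TGB F n ℝ x) 1 (Ψ ∘ e) := by
    refine ⟨fun C => h0 _, ?_, ?_⟩
    · rw [← h1]
      exact Equiv.sum_comp e Ψ
    · rw [one_smul] at hT ⊢
      funext D
      have hD := congrFun hT (e D)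
      show _ = Ψ (e D)
      rw [← hD]
      show ∑ C, Ψ (e C) * TGB F n ℝ x C D = ∑ C, Ψ C * TGB F n ℝ x C (e D)
      rw [← Equiv.sum_comp e (fun C => Ψ C * TGB F n ℝ x C (e D))]
      apply Finset.sum_congr rfl
      intro C _
      have := congrFun (congrFun hsub C) D
      rw [Matrix.submatrix_apply] at this
      rw [this]
  have huniq := stationary_unique F n hn x hx Ψ (Ψ ∘ e) ⟨h0, h1, hT⟩ hst
  have hval := congrFun huniq (QuotientGroup.mk (permGL F n π))
  rw [hval]
  show Ψ (QuotientGroup.mk (permHom F n _ * permHom F n π)) =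
    Ψ (QuotientGroup.mk (permHom F n _))
  rw [map_mul]


end QTsetlin
end
end
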